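/- Let 𝒞 ⊆ 𝒜 be a linear code with weight distribution (c_i) and let φ be a natural number with 0 ≤ φ ≤ n. (a) If every nonzero A ∈ 𝒞^⊥ has rank(A) > 2φ, then q^{mφ} · Σ_{i=φ}^{n} q^{2φ(n−i)} [i; φ] c_i = |𝒞| · [n; φ] · γ(m, φ). (b) If every A ∈ 𝒞^⊥ has rank(A) < 2φ (i.e. φ exceeds the diameter of the dual code), then Σ_{i=0}^{φ} (−1)^i q^{i(i−1)} q^{2i(φ−i)} [n−i; n−φ] γ(m−2i, φ−i) c_i = 0. -/

import Mathlib

/-- The skew-q-nary Gaussian coefficient `[x;k]` for real `x`. -/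
noncomputable def gaussQ (q x : ℝ) (k : ℕ) : ℝ :=
  ∏ i ∈ Finset.range k, (q ^ (2 * x) - q ^ (2 * (i : ℝ))) / (q ^ (2 * (k : ℝ)) - q ^ (2 * (i : ℝ)))

/-- The skew-q-nary Gamma function `γ(x,k)`. -/
noncomputable def skewGamma (q x : ℝ) (k : ℕ) : ℝ :=
  ∏ i ∈ Finset.range k, (q ^ x - q ^ (2 * (i : ℝ)))

/-!
The engine is a MacWilliams-type duality. In odd characteristic the trace form is nondegenerate,
so summing over `𝒞` the Fourier transform of a function `h` of the weight gives `|𝒞|` times the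
sum of `h` over `𝒞^⊥`. Every alternating matrix is congruent to an orthogonal sum of a zero matrix
and hyperbolic planes, and bordering an alternating matrix by a vector `b` raises its weight by one
exactly when `b` lies outside its column space. Hence adding a zero row and column, or a hyperbolic
plane, to a matrix `A` changes the transform of `h` at `A` by an explicit recursion on `h`. The
coefficients `rankKernel` of (b) satisfy the same recursions as the coefficients `rankMoment` of
(a), and so the transform of the first is the second. As `rankKernel` vanishes at weights above `φ`
and `rankMoment` at weights below `φ`, part (a) is the duality for `𝒞`, where only the zero matrix
of `𝒞^⊥` contributes, and part (b) is the duality for `𝒞^⊥`, where nothing does.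

In characteristic two the trace form vanishes, so that `𝒞^⊥` consists of all alternating matrices
and has members of every weight up to `n`; both hypotheses then fail, except for `φ = 0` in (a),
which merely counts the codewords.
-/

universe u

open Matrix

section QAnalogues

variable {K : Type*} [Field K] {q Q : K}

/-- The `Q`-analogue `(x - 1) (x - Q) ⋯ (x - Q ^ (k - 1))` of the falling factorial, the common
building block of the Gaussian coefficients and of the function `γ`. -/
def qFallingFactorial (Q x : K) (k : ℕ) : K := ∏ i ∈ Finset.range k, (x - Q ^ i)

theorem qFallingFactorial_zero (Q x : K) : qFallingFactorial Q x 0 = 1 := Finset.prod_range_zero _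

theorem qFallingFactorial_succ (Q x : K) (k : ℕ) :
    qFallingFactorial Q x (k + 1) = qFallingFactorial Q x k * (x - Q ^ k) :=
  Finset.prod_range_succ _ _

theorem qFallingFactorial_succ' (hQ : Q ≠ 0) (x : K) (k : ℕ) :
    qFallingFactorial Q x (k + 1) = (x - 1) * Q ^ k * qFallingFactorial Q (x / Q) k := by
  have h : ∀ i ∈ Finset.range k, x - Q ^ (i + 1) = Q * (x / Q - Q ^ i) := fun i _ => by
    rw [mul_sub, mul_div_cancel₀ _ hQ, pow_succ']
  rw [qFallingFactorial, Finset.prod_range_succ', Finset.prod_congr rfl h,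
    Finset.prod_mul_distrib, Finset.prod_const, Finset.card_range, pow_zero, qFallingFactorial]
  ring

theorem qFallingFactorial_pow_eq_zero (Q : K) {a k : ℕ} (h : a < k) :
    qFallingFactorial Q (Q ^ a) k = 0 :=
  Finset.prod_eq_zero (Finset.mem_range.2 h) (sub_self _)

theorem qFallingFactorial_pow_self_succ (hQ : Q ≠ 0) (k : ℕ) :
    qFallingFactorial Q (Q ^ (k + 1)) (k + 1) =
      (Q ^ (k + 1) - 1) * Q ^ k * qFallingFactorial Q (Q ^ k) k := by
  rw [qFallingFactorial_succ' hQ, pow_succ, mul_div_cancel_right₀ _ hQ]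

theorem qFallingFactorial_pow_self_ne_zero (hQ : Q ≠ 0) (hQ1 : ∀ k : ℕ, Q ^ (k + 1) ≠ 1)
    (k : ℕ) : qFallingFactorial Q (Q ^ k) k ≠ 0 := by
  induction k with
  | zero => simp [qFallingFactorial_zero]
  | succ k ih =>
    rw [qFallingFactorial_pow_self_succ hQ]
    exact mul_ne_zero (mul_ne_zero (sub_ne_zero.2 (hQ1 k)) (pow_ne_zero _ hQ)) ih

theorem qFallingFactorial_pow_add (Q : K) (a b : ℕ) :
    qFallingFactorial Q (Q ^ (a + b)) (a + b) =
      qFallingFactorial Q (Q ^ (a + b)) b * (Q ^ (b * a) * qFallingFactorial Q (Q ^ a) a) := by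
  have h : ∀ i ∈ Finset.range a,
      Q ^ (b + a) - Q ^ (b + i) = Q ^ b * (Q ^ a - Q ^ i) := fun i _ => by ring
  rw [add_comm a b, qFallingFactorial, Finset.prod_range_add, Finset.prod_congr rfl h,
    Finset.prod_mul_distrib, Finset.prod_const, Finset.card_range, ← pow_mul]
  rfl

/-- The Gaussian binomial coefficient with base `Q`, as an element of a field. -/
def qBinom (Q : K) (a k : ℕ) : K :=
  qFallingFactorial Q (Q ^ a) k / qFallingFactorial Q (Q ^ k) k

theorem qBinom_zero_right (Q : K) (a : ℕ) : qBinom Q a 0 = 1 := by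
  rw [qBinom, qFallingFactorial_zero, qFallingFactorial_zero, div_one]

theorem qBinom_eq_zero (Q : K) {a k : ℕ} (h : a < k) : qBinom Q a k = 0 := by
  rw [qBinom, qFallingFactorial_pow_eq_zero Q h, zero_div]

theorem qBinom_succ_succ (hQ : Q ≠ 0) (hQ1 : ∀ k : ℕ, Q ^ (k + 1) ≠ 1) (a k : ℕ) :
    Q ^ k * qBinom Q (a + 1) (k + 1) = Q ^ k * qBinom Q a (k + 1) + Q ^ a * qBinom Q a k := by
  have hk := qFallingFactorial_pow_self_ne_zero hQ hQ1 k
  have hk1 := sub_ne_zero.2 (hQ1 k)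
  rw [qBinom, qBinom, qBinom, qFallingFactorial_pow_self_succ hQ, qFallingFactorial_succ' hQ,
    qFallingFactorial_succ, pow_succ Q a, mul_div_cancel_right₀ _ hQ]
  field_simp
  ring

theorem qBinom_symm_add (hQ : Q ≠ 0) (hQ1 : ∀ k : ℕ, Q ^ (k + 1) ≠ 1) (a b : ℕ) :
    qBinom Q (a + b) a = qBinom Q (a + b) b := by
  have ha := qFallingFactorial_pow_self_ne_zero hQ hQ1 a
  have hb := qFallingFactorial_pow_self_ne_zero hQ hQ1 b
  have hab := qFallingFactorial_pow_add Q a b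
  have hba := qFallingFactorial_pow_add Q b a
  rw [add_comm b a, mul_comm a b] at hba
  rw [qBinom, qBinom, div_eq_div_iff ha hb]
  exact mul_left_cancel₀ (pow_ne_zero (b * a) hQ) (by linear_combination hab - hba)

/-- The coefficient of weight `j` in the `k`-th moment identity on the dual side. For `X = Q ^ n`
it is `(-1) ^ j * Q ^ (j.choose 2) * Q ^ (j * (k - j)) * [n - j; n - k] * γ(Y / Q ^ j, k - j)`,
written here symmetrically in `X` and `Y`. -/
def momentKernel (Q X Y : K) (k j : ℕ) : K :=
  if j ≤ k then (-1) ^ j * Q ^ (j.choose 2) * Q ^ (j * (k - j)) *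
    (qFallingFactorial Q (X / Q ^ j) (k - j) * qFallingFactorial Q (Y / Q ^ j) (k - j) /
      qFallingFactorial Q (Q ^ (k - j)) (k - j))
  else 0

theorem momentKernel_comm (Q X Y : K) (k j : ℕ) :
    momentKernel Q X Y k j = momentKernel Q Y X k j := by
  simp only [momentKernel, mul_comm (qFallingFactorial Q (X / Q ^ j) (k - j))]

theorem momentKernel_of_lt (Q X Y : K) {k j : ℕ} (h : k < j) : momentKernel Q X Y k j = 0 :=
  if_neg h.not_ge

theorem momentKernel_add (Q X Y : K) (j b : ℕ) :
    momentKernel Q X Y (j + b) j = (-1) ^ j * Q ^ (j.choose 2) * Q ^ (j * b) *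
    (qFallingFactorial Q (X / Q ^ j) b * qFallingFactorial Q (Y / Q ^ j) b /
      qFallingFactorial Q (Q ^ b) b) := by
  rw [momentKernel, if_pos (Nat.le_add_right j b), Nat.add_sub_cancel_left]

theorem momentKernel_self (Q X Y : K) (j : ℕ) :
    momentKernel Q X Y j j = (-1) ^ j * Q ^ (j.choose 2) := by
  simpa [qFallingFactorial_zero] using momentKernel_add Q X Y j 0

theorem momentKernel_zero_right (Q X Y : K) (k : ℕ) :
    momentKernel Q X Y k 0 =
      qFallingFactorial Q X k * qFallingFactorial Q Y k / qFallingFactorial Q (Q ^ k) k := by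
  simp [momentKernel]

theorem momentKernel_zero_left (Q X Y : K) (j : ℕ) :
    momentKernel Q X Y 0 j = if j = 0 then 1 else 0 := by
  rcases j with - | j
  · simp [momentKernel_self]
  · rw [momentKernel_of_lt _ _ _ j.succ_pos, if_neg j.succ_ne_zero]

theorem momentKernel_succ_succ (Q X Y : K) (k j : ℕ) :
    momentKernel Q X Y (k + 1) (j + 1) = -(Q ^ k * momentKernel Q (X / Q) (Y / Q) k j) := by
  rcases lt_or_ge k j with h | h
  · rw [momentKernel_of_lt _ _ _ h, momentKernel_of_lt _ _ _ (Nat.succ_lt_succ h), mul_zero,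
      neg_zero]
  · obtain ⟨c, rfl⟩ := Nat.exists_eq_add_of_le h
    have hchoose : (j + 1).choose 2 = j + j.choose 2 := by
      rw [Nat.choose_succ_succ' j 1, Nat.choose_one_right]
    rw [Nat.add_right_comm, momentKernel_add, momentKernel_add, hchoose, div_div, div_div,
      ← pow_succ']
    ring

theorem momentKernel_diff (hQ : Q ≠ 0) (hQ1 : ∀ k : ℕ, Q ^ (k + 1) ≠ 1) (X Y : K) (k j : ℕ) :
    Q ^ j * (momentKernel Q X Y (k + 1) j - momentKernel Q X Y (k + 1) (j + 1)) =
      Q ^ (k + 1) * momentKernel Q (X / Q) (Y / Q) (k + 1) j +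
        X * Y / Q * momentKernel Q (X / Q) (Y / Q) k j := by
  rcases lt_trichotomy j (k + 1) with h | rfl | h
  · obtain ⟨c, rfl⟩ := Nat.exists_eq_add_of_le (Nat.lt_succ_iff.1 h)
    have hW := qFallingFactorial_pow_self_ne_zero hQ hQ1 c
    have hc := sub_ne_zero.2 (hQ1 c)
    rw [momentKernel_succ_succ, add_assoc, momentKernel_add, momentKernel_add, momentKernel_add,
      qFallingFactorial_pow_self_succ hQ, qFallingFactorial_succ' hQ, qFallingFactorial_succ' hQ,
      qFallingFactorial_succ, qFallingFactorial_succ, div_right_comm X, div_right_comm Y]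
    field_simp
    ring
  · rw [momentKernel_self, momentKernel_self, momentKernel_of_lt _ _ _ (Nat.lt_succ_self _),
      momentKernel_of_lt _ _ _ (Nat.lt_succ_self _)]
    ring
  · rw [momentKernel_of_lt _ _ _ h, momentKernel_of_lt _ _ _ h, momentKernel_of_lt _ _ _ (by omega),
      momentKernel_of_lt _ _ _ (by omega)]
    ring

theorem momentKernel_border (hQ : Q ≠ 0) (hQ1 : ∀ k : ℕ, Q ^ (k + 1) ≠ 1) (X Y : K) (k j : ℕ) :
    Q ^ j * (momentKernel Q X Y k j - momentKernel Q X Y k (j + 1)) +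
        Y * momentKernel Q X Y k (j + 1) =
      Q ^ k * momentKernel Q (X / Q) Y k j := by
  rcases lt_trichotomy j k with h | rfl | h
  · obtain ⟨c, rfl⟩ := Nat.exists_eq_add_of_lt h
    have hW := qFallingFactorial_pow_self_ne_zero hQ hQ1 c
    have hc := sub_ne_zero.2 (hQ1 c)
    rw [momentKernel_succ_succ, add_assoc, momentKernel_add, momentKernel_add, momentKernel_add,
      qFallingFactorial_pow_self_succ hQ, qFallingFactorial_succ' hQ, qFallingFactorial_succ' hQ,
      qFallingFactorial_succ, div_right_comm X, div_right_comm Y]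
    field_simp
    ring
  · rw [momentKernel_self, momentKernel_self, momentKernel_of_lt _ _ _ (Nat.lt_succ_self _)]
    ring
  · rw [momentKernel_of_lt _ _ _ h, momentKernel_of_lt _ _ _ h, momentKernel_of_lt _ _ _ (by omega)]
    ring

/-- The kernel `momentKernel` with the parameters of the alternating matrices of size `t` over a
field with `q` elements; `{q ^ t, q ^ t / q}` is `{q ^ (2 * n), q ^ m}` in either order,
depending on the parity of `t`. -/
def rankKernel (q : K) (t k j : ℕ) : K := momentKernel (q ^ 2) (q ^ t) (q ^ t / q) k j

theorem rankKernel_of_lt (q : K) (t : ℕ) {k j : ℕ} (h : k < j) : rankKernel q t k j = 0 :=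
  momentKernel_of_lt _ _ _ h

theorem rankKernel_zero (q : K) (t j : ℕ) : rankKernel q t 0 j = if j = 0 then 1 else 0 :=
  momentKernel_zero_left _ _ _ _

theorem rankKernel_succ (hq : q ≠ 0) (hq1 : ∀ k : ℕ, (q ^ 2) ^ (k + 1) ≠ 1) (t k j : ℕ) :
    (q ^ 2) ^ j * (rankKernel q (t + 1) k j - rankKernel q (t + 1) k (j + 1)) +
        q ^ t * rankKernel q (t + 1) k (j + 1) =
      (q ^ 2) ^ k * rankKernel q t k j := by
  have hX : q ^ (t + 1) / q ^ 2 = q ^ t / q := by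
    rw [pow_succ, pow_two, mul_div_mul_right _ _ hq]
  have hY : q ^ (t + 1) / q = q ^ t := by rw [pow_succ, mul_div_cancel_right₀ _ hq]
  rw [rankKernel, rankKernel, hY, momentKernel_border (pow_ne_zero 2 hq) hq1, hX,
    momentKernel_comm, rankKernel]

theorem rankKernel_add_two (hq : q ≠ 0) (hq1 : ∀ k : ℕ, (q ^ 2) ^ (k + 1) ≠ 1) (t k j : ℕ) :
    (q ^ 2) ^ j * (rankKernel q (t + 2) (k + 1) j - rankKernel q (t + 2) (k + 1) (j + 1)) =
      (q ^ 2) ^ (k + 1) * rankKernel q t (k + 1) j + q ^ (2 * t + 1) * rankKernel q t k j := by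
  have hX : q ^ (t + 2) / q ^ 2 = q ^ t := by
    rw [pow_add, mul_div_cancel_right₀ _ (pow_ne_zero 2 hq)]
  have hXY : q ^ (t + 2) * (q ^ (t + 2) / q) / q ^ 2 = q ^ (2 * t + 1) := by
    field_simp
    ring
  rw [rankKernel, rankKernel, momentKernel_diff (pow_ne_zero 2 hq) hq1, hXY, div_right_comm, hX,
    rankKernel, rankKernel]

/-- The coefficient of weight `i` in the `k`-th moment of the weight distribution of a code of
alternating matrices of size `t` over a field with `q` elements; here `q ^ t * (q ^ t / q)` is
`q ^ (2 * n + m)`. -/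
def rankMoment (q : K) (t k i : ℕ) : K :=
  (q ^ t * (q ^ t / q) / (q ^ 2) ^ i) ^ k * qBinom (q ^ 2) i k

theorem rankMoment_zero (q : K) (t i : ℕ) : rankMoment q t 0 i = 1 := by
  rw [rankMoment, qBinom_zero_right, pow_zero, one_mul]

theorem rankMoment_of_lt (q : K) (t : ℕ) {k i : ℕ} (h : i < k) : rankMoment q t k i = 0 := by
  rw [rankMoment, qBinom_eq_zero _ h, mul_zero]

theorem rankMoment_succ (q : K) (t k i : ℕ) :
    rankMoment q (t + 1) k i = (q ^ 2) ^ k * rankMoment q t k i := by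
  rw [rankMoment, rankMoment, ← mul_assoc, ← mul_pow]
  ring

theorem rankMoment_add_two (hq : q ≠ 0) (hq1 : ∀ k : ℕ, (q ^ 2) ^ (k + 1) ≠ 1) (t k i : ℕ) :
    rankMoment q (t + 2) (k + 1) (i + 1) =
      (q ^ 2) ^ (k + 1) * rankMoment q t (k + 1) i + q ^ (2 * t + 1) * rankMoment q t k i := by
  have hB := qBinom_succ_succ (pow_ne_zero 2 hq) hq1 i k
  have hZ : q ^ (t + 2) * (q ^ (t + 2) / q) / (q ^ 2) ^ (i + 1) =
      q ^ 2 * (q ^ t * (q ^ t / q) / (q ^ 2) ^ i) := by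
    field_simp
    ring
  have hZ' : q ^ (2 * t + 1) = q ^ t * (q ^ t / q) / (q ^ 2) ^ i * (q ^ 2) ^ (i + 1) := by
    field_simp
    ring
  rw [rankMoment, hZ, rankMoment, rankMoment, hZ']
  linear_combination (q ^ t * (q ^ t / q) / (q ^ 2) ^ i) ^ (k + 1) * q ^ 2 * hB

theorem rankKernel_zero_zero_eq_rankMoment (q : K) (k : ℕ) :
    rankKernel q 0 k 0 = rankMoment q 0 k 0 := by
  rcases k with - | k
  · rw [rankKernel_zero, rankMoment_zero, if_pos rfl]
  · have h := qFallingFactorial_pow_eq_zero (q ^ 2) k.succ_pos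
    rw [pow_zero] at h
    rw [rankMoment_of_lt q 0 k.succ_pos, rankKernel, momentKernel_zero_right, pow_zero, h,
      zero_mul, zero_div]

variable {L : Type*} [Field L] (f : K →+* L)

theorem map_qFallingFactorial (Q x : K) (k : ℕ) :
    f (qFallingFactorial Q x k) = qFallingFactorial (f Q) (f x) k := by
  simp only [qFallingFactorial, map_prod, map_sub, map_pow]

theorem map_rankKernel (q : K) (t k j : ℕ) : f (rankKernel q t k j) = rankKernel (f q) t k j := by
  simp only [rankKernel, momentKernel, apply_ite f, map_zero, map_mul, map_div₀, map_pow, map_neg,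
    map_one, map_qFallingFactorial]

theorem map_rankMoment (q : K) (t k i : ℕ) : f (rankMoment q t k i) = rankMoment (f q) t k i := by
  simp only [rankMoment, qBinom, map_mul, map_div₀, map_pow, map_qFallingFactorial]

end QAnalogues

theorem sum_sum_eq_zero_of_antisymm {ι M : Type*} [Fintype ι] [AddCommMonoid M] {f : ι → ι → M}
    (hf : ∀ i j, f i j + f j i = 0) (hf' : ∀ i, f i i = 0) : ∑ i, ∑ j, f i j = 0 := by
  classical
  rw [← Fintype.sum_prod_type']
  refine Finset.sum_involution (fun x _ => x.swap) (fun x _ => hf _ _)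
    (fun ⟨i, j⟩ _ hij hs => hij ?_) (by simp) (by simp)
  obtain rfl : j = i := congrArg Prod.fst hs
  exact hf' j

theorem rank_fromCols_replicateCol {F ι κ : Type*} [Field F] [Fintype ι] [Finite κ]
    (M : Matrix κ ι F) (b : κ → F) [Decidable (b ∈ LinearMap.range M.mulVecLin)] :
    (fromCols M (replicateCol Unit b)).rank =
      M.rank + if b ∈ LinearMap.range M.mulVecLin then 0 else 1 := by
  have hrange : LinearMap.range (fromCols M (replicateCol Unit b)).mulVecLin =
      LinearMap.range M.mulVecLin ⊔ Submodule.span F {b} := by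
    simp only [range_mulVecLin, ← Submodule.span_union]
    congr 1
    ext x
    simp only [Set.mem_range, Sum.exists, Set.mem_union, Set.mem_singleton_iff, Unique.exists_iff]
    exact or_congr Iff.rfl eq_comm
  rw [Matrix.rank, hrange]
  split_ifs with hb
  · rw [sup_eq_left.2 (by simpa using hb), Matrix.rank, add_zero]
  · rw [Submodule.finrank_sup_span_singleton hb, Matrix.rank]

theorem exists_sum_unit_equiv {ι : Type*} (i : ι) :
    ∃ e : {k : ι // k ≠ i} ⊕ Unit ≃ ι, e (Sum.inr ()) = i := by
  classical
  exact ⟨(Equiv.optionEquivSumPUnit _).symm.trans (Equiv.optionSubtypeNe i), by simp⟩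

theorem sum_coe_submodule {R V M : Type*} [Semiring R] [AddCommMonoid V] [Module R V] [Fintype V]
    [AddCommMonoid M] (S : Submodule R V) {_ : Fintype S} [DecidablePred (· ∈ S)] (f : V → M) :
    ∑ v : S, f v = ∑ v, if v ∈ S then f v else 0 := by
  rw [← Finset.sum_filter]
  exact (Finset.sum_subtype _ (by simp) f).symm

theorem sum_addChar_linearMap_eq_zero {F V : Type*} [Field F] [AddCommGroup V] [Module F V]
    [Fintype V] {ψ : AddChar F ℂ} (hψ : ψ ≠ 1) {l : V →ₗ[F] F} (hl : l ≠ 0) : ∑ v, ψ (l v) = 0 := by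
  obtain ⟨r, hr⟩ := AddChar.ne_one_iff.1 hψ
  obtain ⟨v, rfl⟩ := LinearMap.surjective hl r
  have hl1 : ψ.compAddMonoidHom l.toAddMonoidHom ≠ 0 := AddChar.ne_zero_iff.2 ⟨v, hr⟩
  exact AddChar.sum_eq_zero_iff_ne_zero.2 hl1

/-- The space of alternating matrices; the condition on the diagonal is not implied by
skew-symmetry in characteristic two. -/
def alternatingMatrix (ι F : Type*) [Field F] : Submodule F (Matrix ι ι F) where
  carrier := {A | Aᵀ = -A ∧ ∀ i, A i i = 0}
  zero_mem' := by simp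
  add_mem' := by
    rintro A B ⟨hA, hA'⟩ ⟨hB, hB'⟩
    exact ⟨by rw [transpose_add, hA, hB, neg_add], fun i => by simp [hA', hB']⟩
  smul_mem' := by
    rintro r A ⟨hA, hA'⟩
    exact ⟨by rw [transpose_smul, hA, smul_neg], fun i => by simp [hA']⟩

namespace alternatingMatrix

variable {F ι κ μ : Type*} [Field F]

theorem apply_swap (A : alternatingMatrix ι F) (i j : ι) : A.1 j i = -A.1 i j :=
  congrFun (congrFun A.2.1 i) j

theorem dotProduct_mulVec_self [Fintype ι] (A : alternatingMatrix ι F) (v : ι → F) :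
    v ⬝ᵥ A.1 *ᵥ v = 0 := by
  simp only [dotProduct, mulVec, Finset.mul_sum]
  refine sum_sum_eq_zero_of_antisymm (fun i j => ?_) (fun i => by rw [A.2.2, zero_mul, mul_zero])
  rw [apply_swap A i j]
  ring

section Congruence

/-- The principal submatrix of `A` on the rows and columns listed by `e`. -/
def principalSubmatrix (e : κ → ι) (A : alternatingMatrix ι F) : alternatingMatrix κ F :=
  ⟨A.1.submatrix e e, by rw [transpose_submatrix, A.2.1]; rfl, fun k => A.2.2 (e k)⟩

variable [Fintype ι] [Fintype κ]

/-- The matrix `Pᵀ A P` of the alternating form `A` after the change of variables `P`, which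
need not be square, so that reindexing is the special case of a permutation matrix. -/
def congruence (P : Matrix ι κ F) (A : alternatingMatrix ι F) : alternatingMatrix κ F :=
  ⟨Pᵀ * A.1 * P, by simp [transpose_mul, A.2.1, Matrix.mul_assoc], fun k => by
    rw [← dotProduct_mulVec_self A fun i => P i k, Matrix.mul_assoc]
    simp [Matrix.mul_apply, dotProduct, mulVec]⟩

theorem congruence_one [DecidableEq ι] (A : alternatingMatrix ι F) : congruence 1 A = A := by
  ext1
  simp [congruence]

theorem congruence_congruence (P : Matrix ι κ F) (P' : Matrix κ μ F) (A : alternatingMatrix ι F) :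
    congruence P' (congruence P A) = congruence (P * P') A := by
  ext1
  simp only [congruence, transpose_mul, Matrix.mul_assoc]

/-- Congruence by an invertible matrix, as a bijection. -/
def congruenceEquiv [DecidableEq ι] [DecidableEq κ] {P : Matrix ι κ F} {P' : Matrix κ ι F}
    (h : P * P' = 1) (h' : P' * P = 1) : alternatingMatrix ι F ≃ alternatingMatrix κ F where
  toFun := congruence P
  invFun := congruence P'
  left_inv A := by rw [congruence_congruence, h, congruence_one]
  right_inv A := by rw [congruence_congruence, h', congruence_one]

theorem rank_congruence_le (P : Matrix ι κ F) (A : alternatingMatrix ι F) :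
    (congruence P A).1.rank ≤ A.1.rank :=
  (rank_mul_le_left _ _).trans (rank_mul_le_right _ _)

theorem rank_congruence [DecidableEq ι] {P : Matrix ι κ F} {P' : Matrix κ ι F}
    (h : P * P' = 1) (A : alternatingMatrix ι F) : (congruence P A).1.rank = A.1.rank := by
  refine (rank_congruence_le P A).antisymm ?_
  simpa only [congruence_congruence, h, congruence_one] using
    rank_congruence_le P' (congruence P A)

variable [DecidableEq ι] [DecidableEq κ]

/-- `A` and `B` represent the same alternating form in different coordinates. The index types may
differ, so that reindexing is a congruence. -/
def IsCongruent (A : alternatingMatrix κ F) (B : alternatingMatrix ι F) : Prop :=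
  ∃ (P : Matrix ι κ F) (P' : Matrix κ ι F), P * P' = 1 ∧ P' * P = 1 ∧ A = congruence P B

theorem IsCongruent.trans [Fintype μ] [DecidableEq μ] {A : alternatingMatrix ι F}
    {B : alternatingMatrix κ F} {C : alternatingMatrix μ F} (hAB : IsCongruent A B)
    (hBC : IsCongruent B C) : IsCongruent A C := by
  obtain ⟨P, P', h, h', rfl⟩ := hAB
  obtain ⟨R, R', hR, hR', rfl⟩ := hBC
  refine ⟨R * P, P' * R', ?_, ?_, congruence_congruence R P C⟩
  · rw [Matrix.mul_assoc, ← Matrix.mul_assoc P, h, Matrix.one_mul, hR]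
  · rw [Matrix.mul_assoc, ← Matrix.mul_assoc R', hR', Matrix.one_mul, h']

theorem IsCongruent.rank_eq {A : alternatingMatrix κ F} {B : alternatingMatrix ι F}
    (h : IsCongruent A B) : A.1.rank = B.1.rank := by
  obtain ⟨P, P', hP, -, rfl⟩ := h
  exact rank_congruence hP B

theorem IsCongruent.card_eq {A : alternatingMatrix κ F} {B : alternatingMatrix ι F}
    (h : IsCongruent A B) : Fintype.card κ = Fintype.card ι := by
  obtain ⟨P, P', hP, hP', -⟩ := h
  exact (square_of_invertible P P' hP hP').symm

theorem isCongruent_principalSubmatrix (A : alternatingMatrix ι F) (e : κ ≃ ι) :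
    IsCongruent A (principalSubmatrix e A) := by
  refine ⟨(1 : Matrix ι ι F).submatrix e id, (1 : Matrix ι ι F).submatrix id e, ?_, ?_, ?_⟩
  · rw [← submatrix_mul _ _ e id e Function.bijective_id, Matrix.one_mul,
      submatrix_one_equiv]
  · rw [submatrix_mul_equiv, Matrix.one_mul, submatrix_id_id]
  · ext1
    simp only [congruence, principalSubmatrix, transpose_submatrix, transpose_one,
      submatrix_mul_equiv, Matrix.one_mul, Matrix.mul_one, submatrix_id_id]

end Congruence

section Border

/-- The matrix `[[B, b], [-bᵀ, 0]]`. -/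
def border (b : κ → F) (B : alternatingMatrix κ F) : alternatingMatrix (κ ⊕ Unit) F :=
  ⟨fromBlocks B.1 (replicateCol Unit b) (-replicateRow Unit b) 0, by
    rw [fromBlocks_transpose, fromBlocks_neg, B.2.1, transpose_neg, transpose_replicateCol,
      transpose_replicateRow, neg_neg, transpose_zero, neg_zero], by
    rintro (i | i)
    · exact B.2.2 i
    · rfl⟩

/-- An alternating matrix is a border of the block obtained by deleting its last row and column,
the bordering vector being its last column. -/
def borderEquiv (κ F : Type*) [Field F] :
    alternatingMatrix κ F × (κ → F) ≃ alternatingMatrix (κ ⊕ Unit) F where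
  toFun x := border x.2 x.1
  invFun M := ⟨⟨M.1.toBlocks₁₁, by
      ext i j
      exact apply_swap M (Sum.inl i) (Sum.inl j), fun i => M.2.2 (Sum.inl i)⟩,
    fun k => M.1 (Sum.inl k) (Sum.inr ())⟩
  left_inv x := by
    ext <;> simp [border]
  right_inv M := by
    ext (_ | _) (_ | _)
    exacts [rfl, rfl, (apply_swap M (Sum.inl _) (Sum.inr ())).symm, (M.2.2 (Sum.inr ())).symm]

theorem exists_eq_border (A : alternatingMatrix (κ ⊕ Unit) F) :
    ∃ (B : alternatingMatrix κ F) (b : κ → F), A = border b B := by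
  obtain ⟨⟨B, b⟩, h⟩ := (borderEquiv κ F).surjective A
  exact ⟨B, b, h.symm⟩

theorem mem_range_transpose_fromCols_iff [Fintype κ] (B : alternatingMatrix κ F) (b : κ → F) :
    Sum.elim (-b) 0 ∈ LinearMap.range (fromCols B.1 (replicateCol Unit b))ᵀ.mulVecLin ↔
      b ∈ LinearMap.range B.1.mulVecLin := by
  simp only [LinearMap.mem_range, mulVecLin_apply, transpose_fromCols, fromRows_mulVec,
    Sum.elim_eq_iff, B.2.1, neg_mulVec, neg_inj]
  refine exists_congr fun w => and_iff_left_of_imp ?_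
  rintro rfl
  ext
  exact (dotProduct_comm _ _).trans (dotProduct_mulVec_self B w)

theorem rank_border [Fintype κ] (B : alternatingMatrix κ F) (b : κ → F)
    [Decidable (b ∈ LinearMap.range B.1.mulVecLin)] :
    (border b B).1.rank = B.1.rank + if b ∈ LinearMap.range B.1.mulVecLin then 0 else 2 := by
  classical
  have hborder : (border b B).1ᵀ = fromCols (fromCols B.1 (replicateCol Unit b))ᵀ
      (replicateCol Unit (Sum.elim (-b) 0)) := by
    ext (_ | _) (_ | _) <;> simp [border]
  rw [← rank_transpose, hborder, rank_fromCols_replicateCol, rank_transpose,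
    rank_fromCols_replicateCol, if_congr (mem_range_transpose_fromCols_iff B b) rfl rfl]
  split_ifs <;> rfl

theorem dotProduct_eq_zero_on_range_iff [Fintype κ] (a : κ → F) (B : alternatingMatrix κ F) :
    (∀ b ∈ LinearMap.range B.1.mulVecLin, a ⬝ᵥ b = 0) ↔ B.1 *ᵥ a = 0 := by
  have h : ∀ v, a ⬝ᵥ B.1 *ᵥ v = -(B.1 *ᵥ a ⬝ᵥ v) := fun v => by
    rw [dotProduct_mulVec, ← mulVec_transpose, B.2.1, neg_mulVec, neg_dotProduct]
  simp only [LinearMap.mem_range, mulVecLin_apply, forall_exists_index, forall_apply_eq_imp_iff, h,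
    neg_eq_zero]
  exact dotProduct_eq_zero_iff

/-- The orthogonal sum of `A` and a hyperbolic plane. -/
def addHyperbolicPlane (A : alternatingMatrix κ F) : alternatingMatrix ((κ ⊕ Unit) ⊕ Unit) F :=
  border (Sum.elim 0 1) (border 0 A)

theorem border_mulVec_inr_eq_zero_iff [Fintype κ] (B : alternatingMatrix κ F) (b : κ → F) :
    (border b B).1 *ᵥ Sum.elim 0 1 = 0 ↔ b = 0 := by
  have h : (border b B).1 *ᵥ Sum.elim 0 1 = Sum.elim b 0 := by
    ext (k | k) <;> simp [border, mulVec, dotProduct]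
  rw [h, ← Sum.elim_zero_zero, Sum.elim_eq_iff, and_iff_left rfl]

theorem rank_border_zero [Fintype κ] (A : alternatingMatrix κ F) :
    (border 0 A).1.rank = A.1.rank := by
  classical
  rw [rank_border, if_pos (zero_mem _), add_zero]

theorem rank_addHyperbolicPlane [Fintype κ] (A : alternatingMatrix κ F) :
    (addHyperbolicPlane A).1.rank = A.1.rank + 2 := by
  classical
  have hnotMem : (Sum.elim 0 1 : κ ⊕ Unit → F) ∉ LinearMap.range (border 0 A).1.mulVecLin := by
    rintro ⟨v, hv⟩
    have := congrFun hv (Sum.inr ())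
    simp [border, mulVec, dotProduct] at this
  rw [addHyperbolicPlane, rank_border, if_neg hnotMem, rank_border_zero]

theorem border_border_isCongruent_addHyperbolicPlane [Fintype κ] [DecidableEq κ]
    {a : κ ⊕ Unit → F} (ha : a (Sum.inr ()) ≠ 0) (d : κ → F) (A : alternatingMatrix κ F) :
    ∃ A' : alternatingMatrix κ F, IsCongruent (border a (border d A)) (addHyperbolicPlane A') := by
  obtain ⟨a, rfl⟩ : ∃ x : (κ → F) × F, a = Sum.elim x.1 fun _ => x.2 :=
    ⟨⟨a ∘ Sum.inl, a (Sum.inr ())⟩, by ext (k | k) <;> rfl⟩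
  obtain ⟨a, c⟩ := a
  replace ha : c ≠ 0 := ha
  -- In the coordinates `x`, `u`, `v`, the substitution is `u ↦ c u + a·x`, `v ↦ v - c⁻¹ d·x`.
  let P : Matrix ((κ ⊕ Unit) ⊕ Unit) ((κ ⊕ Unit) ⊕ Unit) F :=
    fromBlocks (fromBlocks 1 0 (replicateRow Unit a) (c • 1)) 0
      (fromCols (replicateRow Unit (-c⁻¹ • d)) 0) 1
  have hP : IsUnit P.det := by simp [P, ha]
  have hA' : A.1 + c⁻¹ • (vecMulVec a d - vecMulVec d a) ∈ alternatingMatrix κ F := by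
    refine add_mem A.2 (Submodule.smul_mem _ _ ⟨?_, fun i => ?_⟩)
    · rw [transpose_sub, transpose_vecMulVec, transpose_vecMulVec, neg_sub]
    · simp [vecMulVec_apply, mul_comm]
  refine ⟨⟨_, hA'⟩, P, P⁻¹, mul_nonsing_inv _ hP, nonsing_inv_mul _ hP, ?_⟩
  ext ((i | i) | i) ((j | j) | j) <;>
    simp [border, addHyperbolicPlane, congruence, P, fromBlocks_transpose, fromBlocks_multiply,
      Matrix.mul_apply, Matrix.one_apply, vecMulVec_apply, ha] <;>
    field_simp
  ring

end Border

section Induction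

theorem exists_isCongruent_border [Fintype ι] [DecidableEq ι] (A : alternatingMatrix ι F) (i : ι) :
    ∃ (b : {k // k ≠ i} → F) (B : alternatingMatrix {k // k ≠ i} F),
      IsCongruent A (border b B) := by
  obtain ⟨e, -⟩ := exists_sum_unit_equiv i
  obtain ⟨B, b, h⟩ := exists_eq_border (principalSubmatrix e A)
  exact ⟨b, B, h ▸ isCongruent_principalSubmatrix A e⟩

theorem exists_border_isCongruent_addHyperbolicPlane [Fintype κ] [DecidableEq κ] {b : κ → F}
    {j : κ} (hb : b j ≠ 0) (B : alternatingMatrix κ F) :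
    ∃ A : alternatingMatrix {k // k ≠ j} F,
      IsCongruent (border b B) (addHyperbolicPlane A) := by
  obtain ⟨e, hej⟩ := exists_sum_unit_equiv j
  let e' := Equiv.sumCongr e (Equiv.refl Unit)
  obtain ⟨B₁, a, h₁⟩ := exists_eq_border (principalSubmatrix e' (border b B))
  obtain ⟨B₂, d, rfl⟩ := exists_eq_border B₁
  have ha : b (e (Sum.inr ())) = a (Sum.inr ()) :=
    congrFun (congrFun (congrArg Subtype.val h₁) (Sum.inl (Sum.inr ()))) (Sum.inr ())
  rw [hej] at ha
  obtain ⟨A, hA⟩ := border_border_isCongruent_addHyperbolicPlane (ha ▸ hb) d B₂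
  exact ⟨A, (h₁ ▸ isCongruent_principalSubmatrix (border b B) e').trans hA⟩

theorem normalForm_induction {F : Type*} [Field F]
    {motive : ∀ {ι : Type u} [Fintype ι] [DecidableEq ι], alternatingMatrix ι F → Prop}
    (isCongruent : ∀ {ι κ : Type u} [Fintype ι] [DecidableEq ι] [Fintype κ] [DecidableEq κ]
      {A : alternatingMatrix ι F} {B : alternatingMatrix κ F},
      IsCongruent A B → motive B → motive A)
    (empty : ∀ {ι : Type u} [Fintype ι] [DecidableEq ι] [IsEmpty ι] (A : alternatingMatrix ι F),
      motive A)
    (border_zero : ∀ {κ : Type u} [Fintype κ] [DecidableEq κ] (A : alternatingMatrix κ F),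
      motive A → motive (border 0 A))
    (addHyperbolicPlane : ∀ {κ : Type u} [Fintype κ] [DecidableEq κ] (A : alternatingMatrix κ F),
      motive A → motive (addHyperbolicPlane A))
    {ι : Type u} [Fintype ι] [DecidableEq ι] (A : alternatingMatrix ι F) : motive A := by
  induction hs : Fintype.card ι using Nat.strong_induction_on generalizing ι with
  | _ s ih =>
  subst hs
  obtain h | ⟨⟨i⟩⟩ := isEmpty_or_nonempty ι
  · exact empty A
  obtain ⟨b, B, hA⟩ := exists_isCongruent_border A i
  refine isCongruent hA ?_
  have hi : Fintype.card {k // k ≠ i} < Fintype.card ι := Fintype.card_subtype_lt (x := i) (by simp)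
  by_cases hb : b = 0
  · subst hb
    exact border_zero B (ih _ hi B rfl)
  · obtain ⟨j, hj⟩ := Function.ne_iff.1 hb
    obtain ⟨A', hA'⟩ := exists_border_isCongruent_addHyperbolicPlane hj B
    exact isCongruent hA' (addHyperbolicPlane A' (ih _
      ((Fintype.card_subtype_le _).trans_lt hi) A' rfl))

end Induction

section SkewRank

variable [Fintype ι] [Fintype κ]

theorem even_rank (A : alternatingMatrix ι F) : Even A.1.rank := by
  classical
  refine normalForm_induction (motive := fun A => Even A.1.rank) (fun h ih => ?_) (fun A => ?_)
    (fun A ih => ?_) (fun A ih => ?_) A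
  · rwa [h.rank_eq]
  · simp [Subsingleton.elim A.1 0]
  · rwa [rank_border_zero]
  · rw [rank_addHyperbolicPlane]
    exact ih.add even_two

/-- Half of the rank of an alternating matrix, the weight of a codeword. -/
noncomputable def skewRank (A : alternatingMatrix ι F) : ℕ := A.1.rank / 2

theorem two_mul_skewRank (A : alternatingMatrix ι F) : 2 * skewRank A = A.1.rank :=
  Nat.two_mul_div_two_of_even (even_rank A)

theorem skewRank_zero : skewRank (0 : alternatingMatrix ι F) = 0 := by
  simp [skewRank]

theorem skewRank_congruence [DecidableEq ι] {P : Matrix ι κ F} {P' : Matrix κ ι F}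
    (h : P * P' = 1) (A : alternatingMatrix ι F) : skewRank (congruence P A) = skewRank A := by
  rw [skewRank, rank_congruence h, skewRank]

theorem IsCongruent.skewRank_eq [DecidableEq ι] [DecidableEq κ] {A : alternatingMatrix κ F}
    {B : alternatingMatrix ι F} (h : IsCongruent A B) : skewRank A = skewRank B := by
  rw [skewRank, h.rank_eq, skewRank]

theorem skewRank_border (B : alternatingMatrix κ F) (b : κ → F)
    [Decidable (b ∈ LinearMap.range B.1.mulVecLin)] :
    skewRank (border b B) =
      skewRank B + if b ∈ LinearMap.range B.1.mulVecLin then 0 else 1 := by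
  rw [skewRank, rank_border, ← two_mul_skewRank]
  split_ifs <;> omega

theorem skewRank_border_zero (A : alternatingMatrix κ F) :
    skewRank (border 0 A) = skewRank A := by
  rw [skewRank, rank_border_zero, skewRank]

theorem skewRank_addHyperbolicPlane (A : alternatingMatrix κ F) :
    skewRank (addHyperbolicPlane A) = skewRank A + 1 := by
  rw [skewRank, rank_addHyperbolicPlane, Nat.add_div_right _ two_pos, skewRank]

theorem exists_skewRank_eq {r : ℕ} (hr : 2 * r ≤ Fintype.card ι) :
    ∃ A : alternatingMatrix ι F, skewRank A = r := by
  classical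
  induction r generalizing ι with
  | zero => exact ⟨0, skewRank_zero⟩
  | succ r ih =>
    let κ := ULift (Fin (Fintype.card ι - 2))
    have hκ : Fintype.card κ = Fintype.card ι - 2 := by simp [κ]
    have hcard : Fintype.card ι = Fintype.card ((κ ⊕ Unit) ⊕ Unit) := by
      simp only [Fintype.card_sum, Fintype.card_unit, hκ]
      omega
    obtain ⟨A, hA⟩ := ih (ι := κ) (by omega)
    refine ⟨principalSubmatrix (Fintype.equivOfCardEq hcard) (addHyperbolicPlane A), ?_⟩
    rw [← (isCongruent_principalSubmatrix _ _).skewRank_eq, skewRank_addHyperbolicPlane, hA]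

/-- The number of codewords of weight `i` of a code of alternating matrices. -/
noncomputable def weightDistribution (S : Submodule F (alternatingMatrix ι F)) (i : ℕ) : ℕ :=
  Nat.card {A : S // skewRank A.1 = i}

theorem sum_skewRank_eq_sum_weightDistribution (S : Submodule F (alternatingMatrix ι F))
    [Fintype S] (f : ℕ → ℝ) :
    ∑ A : S, f (skewRank A.1) =
      ∑ i ∈ Finset.range (Fintype.card ι / 2 + 1), f i * weightDistribution S i := by
  classical
  have hmaps : ∀ A ∈ (Finset.univ : Finset S),
      skewRank A.1 ∈ Finset.range (Fintype.card ι / 2 + 1) := fun A _ =>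
    Finset.mem_range.2 (Nat.lt_succ_of_le (Nat.div_le_div_right A.1.1.rank_le_card_width))
  rw [← Finset.sum_fiberwise_of_maps_to' hmaps]
  refine Finset.sum_congr rfl fun i _ => ?_
  rw [Finset.sum_const, nsmul_eq_mul, mul_comm, ← Fintype.card_subtype, weightDistribution,
    Nat.card_eq_fintype_card]

end SkewRank

section TraceForm

variable [Fintype ι] [Fintype κ]

/-- The form `⟨A, B⟩ = tr(Aᵀ B)`; the dual of a code is its orthogonal for this form. -/
def traceForm (ι F : Type*) [Field F] [Fintype ι] :
    LinearMap.BilinForm F (alternatingMatrix ι F) :=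
  LinearMap.mk₂ F (fun A B => trace (A.1ᵀ * B.1))
    (fun A A' B => by simp [Matrix.add_mul]) (fun r A B => by simp)
    (fun A B B' => by simp [Matrix.mul_add]) (fun r A B => by simp)

theorem traceForm_apply (A B : alternatingMatrix ι F) : traceForm ι F A B = trace (A.1ᵀ * B.1) :=
  rfl

theorem traceForm_comm (A B : alternatingMatrix ι F) : traceForm ι F A B = traceForm ι F B A := by
  rw [traceForm_apply, ← trace_transpose, transpose_mul, transpose_transpose, traceForm_apply]

theorem traceForm_isRefl (ι F : Type*) [Field F] [Fintype ι] : (traceForm ι F).IsRefl :=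
  fun A B h => (traceForm_comm B A).trans h

theorem traceForm_congruence (P : Matrix ι κ F) (A : alternatingMatrix ι F)
    (B : alternatingMatrix κ F) :
    traceForm κ F (congruence P A) B = traceForm ι F A (congruence Pᵀ B) := by
  simp only [traceForm_apply, congruence, transpose_mul, transpose_transpose, Matrix.mul_assoc]
  rw [trace_mul_comm]
  simp only [Matrix.mul_assoc]

theorem traceForm_border (a b : κ → F) (A B : alternatingMatrix κ F) :
    traceForm (κ ⊕ Unit) F (border a A) (border b B) = 2 * (a ⬝ᵥ b) + traceForm κ F A B := by
  simp only [traceForm_apply, border, trace, diag, Matrix.mul_apply, dotProduct, transpose_apply,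
    Fintype.sum_sum_type, Finset.univ_unique, Finset.sum_singleton, fromBlocks_apply₁₁,
    fromBlocks_apply₁₂, fromBlocks_apply₂₁, fromBlocks_apply₂₂, Matrix.neg_apply,
    replicateCol_apply, replicateRow_apply, Matrix.zero_apply, neg_mul_neg, mul_zero, add_zero,
    Finset.sum_add_distrib]
  ring

theorem traceForm_nondegenerate (h2 : (2 : F) ≠ 0) : (traceForm ι F).Nondegenerate := by
  classical
  refine (traceForm_isRefl ι F).nondegenerate_iff_separatingLeft.2 fun A hA => ?_
  ext i j
  obtain rfl | hij := eq_or_ne i j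
  · exact A.2.2 i
  have hmem : single i j (1 : F) - single j i 1 ∈ alternatingMatrix ι F :=
    ⟨by simp, fun k => by by_cases hik : i = k <;> by_cases hjk : j = k <;> simp_all⟩
  have h : A.1 i j + A.1 i j = 0 := by
    simpa [traceForm_apply, Matrix.mul_sub, trace_mul_single, apply_swap A i j] using hA ⟨_, hmem⟩
  exact (mul_eq_zero.1 ((two_mul _).trans h)).resolve_left h2

theorem traceForm_eq_zero (h2 : (2 : F) = 0) : traceForm ι F = 0 := by
  refine LinearMap.ext₂ fun A B => ?_
  simp only [traceForm_apply, trace, diag, Matrix.mul_apply, transpose_apply]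
  refine sum_sum_eq_zero_of_antisymm (fun i j => ?_) (fun i => by rw [A.2.2, zero_mul])
  rw [apply_swap A i j, apply_swap B i j]
  linear_combination A.1 i j * B.1 i j * h2

theorem two_ne_zero_of_skewRank_ne {r : ℕ} (hr : 2 * r ≤ Fintype.card ι)
    {S : Submodule F (alternatingMatrix ι F)}
    (h : ∀ A ∈ (traceForm ι F).orthogonal S, skewRank A ≠ r) : (2 : F) ≠ 0 := by
  intro h2
  obtain ⟨A, hA⟩ := exists_skewRank_eq (F := F) hr
  refine h A (fun B _ => ?_) hA
  rw [traceForm_eq_zero h2]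
  rfl

theorem orthogonal_orthogonal_traceForm (h2 : (2 : F) ≠ 0)
    (S : Submodule F (alternatingMatrix ι F)) :
    (traceForm ι F).orthogonal ((traceForm ι F).orthogonal S) = S := by
  have hrefl := traceForm_isRefl ι F
  have hnondegenerate := traceForm_nondegenerate (ι := ι) h2
  exact LinearMap.BilinForm.orthogonal_orthogonal hnondegenerate hrefl S

end TraceForm

section Fourier

theorem card_sq_pow_succ_ne_one (F : Type*) [Fintype F] [Nontrivial F] (k : ℕ) :
    ((Fintype.card F : ℂ) ^ 2) ^ (k + 1) ≠ 1 := by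
  rw [← pow_mul]
  exact_mod_cast (Nat.one_lt_pow (by omega) Fintype.one_lt_card).ne'

variable [Fintype F] [Fintype ι] [Fintype κ] {ψ : AddChar F ℂ}

noncomputable local instance {V : Type*} [AddCommGroup V] [Module F V] [Finite V]
    (S : Submodule F V) : Fintype S := Fintype.ofFinite S

/-- The Fourier transform on the space of alternating matrices, for the pairing `ψ ⟨A, B⟩`, of
the function `h` of the weight. -/
noncomputable def rankFourier (ψ : AddChar F ℂ) (h : ℕ → ℂ) (A : alternatingMatrix ι F) : ℂ :=
  ∑ B : alternatingMatrix ι F, h (skewRank B) * ψ (traceForm ι F A B)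

theorem rankFourier_add (ψ : AddChar F ℂ) (f g : ℕ → ℂ) (A : alternatingMatrix ι F) :
    rankFourier ψ (fun j => f j + g j) A = rankFourier ψ f A + rankFourier ψ g A := by
  simp only [rankFourier, add_mul, Finset.sum_add_distrib]

theorem rankFourier_const_mul (ψ : AddChar F ℂ) (c : ℂ) (f : ℕ → ℂ) (A : alternatingMatrix ι F) :
    rankFourier ψ (fun j => c * f j) A = c * rankFourier ψ f A := by
  simp only [rankFourier, mul_assoc, Finset.mul_sum]

theorem IsCongruent.rankFourier_eq [DecidableEq ι] [DecidableEq κ] (ψ : AddChar F ℂ) (h : ℕ → ℂ)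
    {A : alternatingMatrix ι F} {B : alternatingMatrix κ F} (hAB : IsCongruent A B) :
    rankFourier ψ h A = rankFourier ψ h B := by
  obtain ⟨P, P', hP, hP', rfl⟩ := hAB
  have hPt : Pᵀ * P'ᵀ = 1 := by rw [← transpose_mul, hP', transpose_one]
  have hPt' : P'ᵀ * Pᵀ = 1 := by rw [← transpose_mul, hP, transpose_one]
  refine Fintype.sum_equiv (congruenceEquiv hPt hPt') _ _ fun C => ?_
  rw [traceForm_congruence]
  exact congrArg (fun r => h r * _) (skewRank_congruence hPt C).symm

theorem card_range_mulVecLin (B : alternatingMatrix κ F) :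
    (Fintype.card (LinearMap.range B.1.mulVecLin) : ℂ) =
      ((Fintype.card F : ℂ) ^ 2) ^ skewRank B := by
  rw [Module.card_eq_pow_finrank (K := F), ← pow_mul, two_mul_skewRank, Nat.cast_pow, Matrix.rank]

theorem sum_eq_sum_border [DecidableEq κ] (f : alternatingMatrix (κ ⊕ Unit) F → ℂ) :
    ∑ M, f M = ∑ B : alternatingMatrix κ F, ∑ b, f (border b B) := by
  rw [← (borderEquiv κ F).sum_comp, Fintype.sum_prod_type]
  rfl

theorem rankFourier_border [DecidableEq κ] (ψ : AddChar F ℂ) (h : ℕ → ℂ) (a : κ → F)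
    (A : alternatingMatrix κ F) :
    rankFourier ψ h (border a A) = ∑ B : alternatingMatrix κ F, ψ (traceForm κ F A B) *
      (h (skewRank B + 1) * ∑ b, ψ (2 * (a ⬝ᵥ b)) +
        (h (skewRank B) - h (skewRank B + 1)) *
          ∑ b : LinearMap.range B.1.mulVecLin, ψ (2 * (a ⬝ᵥ b.1))) := by
  classical
  rw [rankFourier, sum_eq_sum_border]
  refine Finset.sum_congr rfl fun B _ => ?_
  rw [sum_coe_submodule _ fun b => ψ (2 * (a ⬝ᵥ b)), Finset.mul_sum, Finset.mul_sum,
    ← Finset.sum_add_distrib, Finset.mul_sum]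
  refine Finset.sum_congr rfl fun b _ => ?_
  rw [skewRank_border, traceForm_border, AddChar.map_add_eq_mul]
  split_ifs
  · rw [add_zero]
    ring
  · ring

theorem rankFourier_border_zero (ψ : AddChar F ℂ) (h : ℕ → ℂ) (A : alternatingMatrix κ F) :
    rankFourier ψ h (border 0 A) =
      rankFourier ψ (fun j => ((Fintype.card F : ℂ) ^ 2) ^ j * (h j - h (j + 1)) +
        (Fintype.card F : ℂ) ^ Fintype.card κ * h (j + 1)) A := by
  classical
  rw [rankFourier_border]
  refine Finset.sum_congr rfl fun B _ => ?_
  simp only [zero_dotProduct, mul_zero, AddChar.map_zero_eq_one, Finset.sum_const,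
    Finset.card_univ, nsmul_one, card_range_mulVecLin, Fintype.card_fun, Nat.cast_pow]
  ring

theorem sum_range_addChar (h2 : (2 : F) ≠ 0) (hψ : ψ ≠ 1) (a : κ → F) (B : alternatingMatrix κ F)
    [Decidable (B.1 *ᵥ a = 0)] :
    ∑ b : LinearMap.range B.1.mulVecLin, ψ (2 * (a ⬝ᵥ b.1)) =
      if B.1 *ᵥ a = 0 then ((Fintype.card F : ℂ) ^ 2) ^ skewRank B else 0 := by
  rw [← card_range_mulVecLin]
  have hiff := dotProduct_eq_zero_on_range_iff a B
  split_ifs with h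
  · simp [hiff.2 h _ (Subtype.prop _)]
  · refine sum_addChar_linearMap_eq_zero hψ
      (l := ((2 : F) • dotProductBilin F F a).domRestrict (LinearMap.range B.1.mulVecLin))
      fun hl => h (hiff.1 fun b hb => ?_)
    exact (mul_eq_zero.1 (DFunLike.congr_fun hl ⟨b, hb⟩)).resolve_left h2

theorem rankFourier_addHyperbolicPlane (h2 : (2 : F) ≠ 0) (hψ : ψ ≠ 1) (h : ℕ → ℂ)
    (A : alternatingMatrix κ F) :
    rankFourier ψ h (addHyperbolicPlane A) =
      rankFourier ψ (fun j => ((Fintype.card F : ℂ) ^ 2) ^ j * (h j - h (j + 1))) A := by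
  classical
  have hsum : ∑ b : κ ⊕ Unit → F, ψ (2 * ((Sum.elim 0 1 : κ ⊕ Unit → F) ⬝ᵥ b)) = 0 := by
    refine sum_addChar_linearMap_eq_zero hψ
      (l := (2 : F) • dotProductBilin F F (Sum.elim 0 1 : κ ⊕ Unit → F)) fun hl => h2 ?_
    simpa using DFunLike.congr_fun hl (Sum.elim 0 1 : κ ⊕ Unit → F)
  rw [addHyperbolicPlane, rankFourier_border, sum_eq_sum_border]
  refine Finset.sum_congr rfl fun B _ => ?_
  rw [Finset.sum_eq_single 0]
  · rw [hsum, sum_range_addChar h2 hψ, if_pos ((border_mulVec_inr_eq_zero_iff B 0).2 rfl),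
      skewRank_border_zero, traceForm_border, zero_dotProduct]
    simp only [mul_zero, zero_add]
    ring
  · intro b _ hb
    rw [hsum, sum_range_addChar h2 hψ, if_neg (mt (border_mulVec_inr_eq_zero_iff B b).1 hb)]
    simp only [mul_zero, add_zero]
  · exact fun h0 => absurd (Finset.mem_univ _) h0

theorem sum_rankFourier (hψ : ψ ≠ 1) (h : ℕ → ℂ) (S : Submodule F (alternatingMatrix ι F)) :
    ∑ A : S, rankFourier ψ h A.1 =
      Fintype.card S * ∑ B : (traceForm ι F).orthogonal S, h (skewRank B.1) := by
  classical
  have hsum : ∀ B : alternatingMatrix ι F, ∑ A : S, ψ (traceForm ι F A.1 B) =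
      if B ∈ (traceForm ι F).orthogonal S then (Fintype.card S : ℂ) else 0 := fun B => by
    split_ifs with hB
    · simp [(LinearMap.BilinForm.mem_orthogonal_iff.1 hB _ (Subtype.prop _) :)]
    · refine sum_addChar_linearMap_eq_zero hψ (l := ((traceForm ι F).flip B).domRestrict S)
        fun hl => hB fun A hA => DFunLike.congr_fun hl (⟨A, hA⟩ : S)
  simp only [rankFourier]
  rw [Finset.sum_comm, sum_coe_submodule _ fun B => h (skewRank B), Finset.mul_sum]
  refine Finset.sum_congr rfl fun B _ => ?_
  rw [← Finset.mul_sum, hsum, mul_ite, mul_ite, mul_zero, mul_zero, mul_comm]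

theorem rankFourier_rankKernel (h2 : (2 : F) ≠ 0) {ψ : AddChar F ℂ} (hψ : ψ ≠ 1)
    (A : alternatingMatrix ι F) (k : ℕ) :
    rankFourier ψ (rankKernel (Fintype.card F : ℂ) (Fintype.card ι) k) A =
      rankMoment (Fintype.card F : ℂ) (Fintype.card ι) k (skewRank A) := by
  classical
  have hq : (Fintype.card F : ℂ) ≠ 0 := Nat.cast_ne_zero.2 Fintype.card_ne_zero
  have hq1 := card_sq_pow_succ_ne_one F
  revert k
  refine normalForm_induction (motive := fun {ι} _ _ A => ∀ k, rankFourier ψ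
    (rankKernel (Fintype.card F : ℂ) (Fintype.card ι) k) A =
      rankMoment (Fintype.card F : ℂ) (Fintype.card ι) k (skewRank A))
    (fun h ih k => ?_) (@fun ι _ _ _ A k => ?_) (fun A ih k => ?_) (fun A ih k => ?_) A
  · rw [h.card_eq, h.skewRank_eq, h.rankFourier_eq, ih]
  · have h0 : A = 0 := Subtype.ext (Subsingleton.elim A.1 0)
    rw [rankFourier, Fintype.sum_eq_single A fun B hB =>
      absurd (Subtype.ext (Subsingleton.elim B.1 A.1)) hB, h0, map_zero, AddChar.map_zero_eq_one,
      mul_one, skewRank_zero, Fintype.card_eq_zero (α := ι), rankKernel_zero_zero_eq_rankMoment]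
  · rw [rankFourier_border_zero, Fintype.card_sum, Fintype.card_unit, skewRank_border_zero,
      rankMoment_succ, ← ih, ← rankFourier_const_mul]
    simp only [rankKernel_succ hq hq1]
  · rw [rankFourier_addHyperbolicPlane h2 hψ, Fintype.card_sum, Fintype.card_sum,
      Fintype.card_unit, add_assoc, one_add_one_eq_two, skewRank_addHyperbolicPlane]
    rcases k with - | k
    · have h0 := ih 0
      rw [rankMoment_zero] at h0 ⊢
      rw [← h0]
      congr 1
      ext (- | j) <;> simp [rankKernel_zero]
    · simp only [rankKernel_add_two hq hq1]
      rw [rankFourier_add, rankFourier_const_mul, rankFourier_const_mul, ih, ih,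
        rankMoment_add_two hq hq1]

theorem sum_rankMoment (h2 : (2 : F) ≠ 0) (S : Submodule F (alternatingMatrix ι F)) (k : ℕ) :
    ∑ A : S, rankMoment (Fintype.card F : ℝ) (Fintype.card ι) k (skewRank A.1) =
      Fintype.card S * ∑ B : (traceForm ι F).orthogonal S,
        rankKernel (Fintype.card F : ℝ) (Fintype.card ι) k (skewRank B.1) := by
  obtain ⟨ψ, hψ⟩ : ∃ ψ : AddChar F ℂ, ψ ≠ 1 := ⟨AddChar.FiniteField.primitiveChar_to_Complex F, by
    simpa using (AddChar.FiniteField.primitiveChar_to_Complex_isPrimitive F) one_ne_zero⟩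
  apply Complex.ofRealHom.injective
  simp only [map_sum, map_mul, map_natCast, map_rankMoment, map_rankKernel,
    ← rankFourier_rankKernel h2 hψ]
  exact sum_rankFourier hψ _ S

theorem sum_rankMoment_of_lt_skewRank_dual {S : Submodule F (alternatingMatrix ι F)} {k : ℕ}
    (hk : 2 * k ≤ Fintype.card ι)
    (h : ∀ B ∈ (traceForm ι F).orthogonal S, B ≠ 0 → k < skewRank B) :
    ∑ i ∈ Finset.range (Fintype.card ι / 2 + 1),
        rankMoment (Fintype.card F : ℝ) (Fintype.card ι) k i * weightDistribution S i =
      Nat.card S * rankKernel (Fintype.card F : ℝ) (Fintype.card ι) k 0 := by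
  rw [← sum_skewRank_eq_sum_weightDistribution, Nat.card_eq_fintype_card]
  rcases Nat.eq_zero_or_pos k with rfl | hk0
  · simp only [rankMoment_zero, rankKernel_zero, Finset.sum_const, Finset.card_univ, nsmul_one,
      if_true, mul_one]
  · have h2 : (2 : F) ≠ 0 := two_ne_zero_of_skewRank_ne hk fun B hB hBk => by
      have hB0 : B ≠ 0 := by
        rintro rfl
        exact hk0.ne (skewRank_zero.symm.trans hBk)
      exact (h B hB hB0).ne' hBk
    rw [sum_rankMoment h2, Fintype.sum_eq_single 0 fun B hB =>
      rankKernel_of_lt _ _ (h B.1 B.2 (by simpa using hB)), Submodule.coe_zero, skewRank_zero]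

theorem sum_rankKernel_eq_zero_of_skewRank_dual_lt {S : Submodule F (alternatingMatrix ι F)}
    {k : ℕ} (hk : 2 * k ≤ Fintype.card ι)
    (h : ∀ B ∈ (traceForm ι F).orthogonal S, skewRank B < k) :
    ∑ i ∈ Finset.range (Fintype.card ι / 2 + 1),
      rankKernel (Fintype.card F : ℝ) (Fintype.card ι) k i * weightDistribution S i = 0 := by
  rw [← sum_skewRank_eq_sum_weightDistribution]
  have h2 : (2 : F) ≠ 0 := two_ne_zero_of_skewRank_ne hk fun B hB => (h B hB).ne
  have hdual := sum_rankMoment h2 ((traceForm ι F).orthogonal S) k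
  rw [orthogonal_orthogonal_traceForm h2, Finset.sum_eq_zero fun B _ =>
    rankMoment_of_lt _ _ (h B.1 B.2), zero_eq_mul] at hdual
  exact hdual.resolve_left (Nat.cast_ne_zero.2 Fintype.card_ne_zero)

end Fourier

end alternatingMatrix

open alternatingMatrix

section Codes

variable {F : Type*} [Field F] {ι : Type*} [Fintype ι] {𝒞 : Submodule F (Matrix ι ι F)}

theorem weightDistribution_submoduleOf (h𝒞 : 𝒞 ≤ alternatingMatrix ι F) (i : ℕ) :
    weightDistribution (𝒞.submoduleOf (alternatingMatrix ι F)) i =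
      Nat.card {A : Matrix ι ι F // A ∈ 𝒞 ∧ A.rank = 2 * i} := by
  refine Nat.card_congr
    (((Submodule.submoduleOfEquivOfLe h𝒞).toEquiv.subtypeEquiv fun A => ?_).trans
      (Equiv.subtypeSubtypeEquivSubtypeInter (· ∈ 𝒞) fun A => A.rank = 2 * i))
  change _ ↔ A.1.1.rank = 2 * i
  rw [← two_mul_skewRank]
  omega

theorem trace_transpose_mul_eq_zero_of_mem_orthogonal (h𝒞 : 𝒞 ≤ alternatingMatrix ι F)
    {B : alternatingMatrix ι F}
    (hB : B ∈ (traceForm ι F).orthogonal (𝒞.submoduleOf (alternatingMatrix ι F))) :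
    ∀ A ∈ 𝒞, trace (B.1ᵀ * A) = 0 := fun A hA => by
  have h := (traceForm_comm B ⟨A, h𝒞 hA⟩).trans (hB ⟨A, h𝒞 hA⟩ hA)
  rwa [traceForm_apply] at h

end Codes

section Parameters

variable {q : ℝ} {t n m φ : ℕ}

theorem rpow_two_mul_natCast (q : ℝ) (i : ℕ) : q ^ (2 * (i : ℝ)) = (q ^ 2) ^ i := by
  rw [← pow_mul, ← Real.rpow_natCast, Nat.cast_mul, Nat.cast_two]

theorem gaussQ_natCast (q : ℝ) (a k : ℕ) : gaussQ q a k = qBinom (q ^ 2) a k := by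
  simp only [gaussQ, rpow_two_mul_natCast, Finset.prod_div_distrib, qBinom, qFallingFactorial]

theorem skewGamma_natCast (q : ℝ) (m k : ℕ) :
    skewGamma q m k = qFallingFactorial (q ^ 2) (q ^ m) k := by
  simp only [skewGamma, rpow_two_mul_natCast, Real.rpow_natCast, qFallingFactorial]

theorem skewGamma_sub (hq : 0 < q) (m i k : ℕ) :
    skewGamma q ((m : ℝ) - 2 * i) k = qFallingFactorial (q ^ 2) (q ^ m / (q ^ 2) ^ i) k := by
  simp only [skewGamma, Real.rpow_sub hq, rpow_two_mul_natCast, Real.rpow_natCast,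
    qFallingFactorial]

theorem momentKernel_eq_gaussQ_mul_skewGamma (hq : 1 < q) (m : ℕ) {i : ℕ} (hi : i ≤ φ)
    (hφ : φ ≤ n) :
    momentKernel (q ^ 2) ((q ^ 2) ^ n) (q ^ m) φ i =
      (-1) ^ i * q ^ (i * (i - 1)) * q ^ (2 * i * (φ - i)) *
        gaussQ q ((n : ℝ) - i) (n - φ) * skewGamma q ((m : ℝ) - 2 * i) (φ - i) := by
  have hq0 : 0 < q := one_pos.trans hq
  have hQ : q ^ 2 ≠ 0 := (pow_pos hq0 2).ne'
  have hQ1 : ∀ k : ℕ, (q ^ 2) ^ (k + 1) ≠ 1 := fun k => by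
    rw [← pow_mul]
    exact (one_lt_pow₀ hq (by omega)).ne'
  obtain ⟨a, rfl⟩ := Nat.exists_eq_add_of_le hi
  obtain ⟨b, rfl⟩ := Nat.exists_eq_add_of_le hφ
  have hb : ((i + a + b : ℕ) : ℝ) - i = (a + b : ℕ) := by push_cast; ring
  have hpow : (q ^ 2) ^ (i + a + b) / (q ^ 2) ^ i = (q ^ 2) ^ (a + b) := by
    rw [add_assoc, pow_add, mul_div_cancel_left₀ _ (pow_ne_zero _ hQ)]
  have hchoose : (q ^ 2) ^ i.choose 2 = q ^ (i * (i - 1)) := by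
    rw [← pow_mul, Nat.choose_two_right, Nat.mul_div_cancel' (Nat.even_mul_pred_self i).two_dvd]
  rw [momentKernel_add, hb, gaussQ_natCast, skewGamma_sub hq0, Nat.add_sub_cancel_left,
    Nat.add_sub_cancel_left, ← qBinom_symm_add hQ hQ1, hpow, hchoose, qBinom, mul_assoc 2 i,
    pow_mul q 2]
  ring

theorem pow_eq_and_pow_div_eq (hq : q ≠ 0) (ht : 2 ≤ t) (hn : n = t / 2)
    (hm : m = t * (t - 1) / (2 * n)) :
    (q ^ t = (q ^ 2) ^ n ∧ q ^ t / q = q ^ m) ∨ (q ^ t = q ^ m ∧ q ^ t / q = (q ^ 2) ^ n) := by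
  rcases Nat.even_or_odd' t with ⟨s, rfl | rfl⟩
  · obtain rfl : n = s := by omega
    rw [Nat.mul_div_cancel_left _ (by omega)] at hm
    exact .inl ⟨pow_mul q 2 n, by rw [hm, div_eq_iff hq, pow_sub_one_mul (by omega)]⟩
  · obtain rfl : n = s := by omega
    rw [Nat.add_sub_cancel, Nat.mul_div_cancel _ (by omega)] at hm
    rw [hm, ← pow_mul, pow_succ, mul_div_cancel_right₀ _ hq]
    exact .inr ⟨rfl, rfl⟩

theorem rankKernel_eq_momentKernel (hq : q ≠ 0) (ht : 2 ≤ t) (hn : n = t / 2)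
    (hm : m = t * (t - 1) / (2 * n)) (k j : ℕ) :
    rankKernel q t k j = momentKernel (q ^ 2) ((q ^ 2) ^ n) (q ^ m) k j := by
  rcases pow_eq_and_pow_div_eq hq ht hn hm with ⟨hX, hY⟩ | ⟨hX, hY⟩
  · rw [rankKernel, hY, hX]
  · rw [rankKernel, hY, hX, momentKernel_comm]

theorem rankKernel_zero_right (hq : q ≠ 0) (ht : 2 ≤ t) (hn : n = t / 2)
    (hm : m = t * (t - 1) / (2 * n)) (k : ℕ) :
    rankKernel q t k 0 = gaussQ q n k * skewGamma q m k := by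
  rw [rankKernel_eq_momentKernel hq ht hn hm, momentKernel_zero_right, gaussQ_natCast,
    skewGamma_natCast, qBinom, div_mul_eq_mul_div]

theorem sum_rankKernel_mul (hq : 1 < q) (ht : 2 ≤ t) (hn : n = t / 2)
    (hm : m = t * (t - 1) / (2 * n)) (hφ : φ ≤ n) (c : ℕ → ℝ) :
    ∑ i ∈ Finset.range (n + 1), rankKernel q t φ i * c i =
      ∑ i ∈ Finset.range (φ + 1), (-1) ^ i * q ^ (i * (i - 1)) * q ^ (2 * i * (φ - i)) *
        gaussQ q ((n : ℝ) - i) (n - φ) * skewGamma q ((m : ℝ) - 2 * i) (φ - i) * c i := by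
  have hsub := Finset.range_subset_range.2 (Nat.succ_le_succ hφ)
  rw [← Finset.sum_subset hsub fun i _ hi => by
    rw [rankKernel_of_lt _ _ (by simpa using hi), zero_mul]]
  refine Finset.sum_congr rfl fun i hi => ?_
  rw [rankKernel_eq_momentKernel (one_pos.trans hq).ne' ht hn hm,
    momentKernel_eq_gaussQ_mul_skewGamma hq m (Nat.lt_succ_iff.1 (Finset.mem_range.1 hi)) hφ]

theorem rankMoment_eq_gaussQ (hq : q ≠ 0) (ht : 2 ≤ t) (hn : n = t / 2)
    (hm : m = t * (t - 1) / (2 * n)) {i : ℕ} (hi : i ≤ n) (k : ℕ) :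
    rankMoment q t k i = q ^ (m * k) * (q ^ (2 * k * (n - i)) * gaussQ q i k) := by
  have hXY : q ^ t * (q ^ t / q) = q ^ m * (q ^ 2) ^ n := by
    rcases pow_eq_and_pow_div_eq hq ht hn hm with ⟨hX, hY⟩ | ⟨hX, hY⟩
    · rw [hY, hX, mul_comm]
    · rw [hY, hX]
  rw [rankMoment, hXY, mul_div_assoc, div_eq_mul_inv ((q ^ 2) ^ n),
    ← pow_sub₀ _ (pow_ne_zero 2 hq) hi, gaussQ_natCast, mul_pow, ← pow_mul, ← pow_mul, ← pow_mul,
    mul_assoc, mul_comm (n - i), ← mul_assoc 2]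

theorem sum_rankMoment_mul (hq : q ≠ 0) (ht : 2 ≤ t) (hn : n = t / 2)
    (hm : m = t * (t - 1) / (2 * n)) (k : ℕ) (c : ℕ → ℝ) :
    ∑ i ∈ Finset.range (n + 1), rankMoment q t k i * c i =
      q ^ (m * k) * ∑ i ∈ Finset.Icc k n, q ^ (2 * k * (n - i)) * gaussQ q i k * c i := by
  have hsub : Finset.Icc k n ⊆ Finset.range (n + 1) := fun i hi =>
    Finset.mem_range.2 (Nat.lt_succ_of_le (Finset.mem_Icc.1 hi).2)
  rw [← Finset.sum_subset hsub fun i hi hik => by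
    have := Finset.mem_range.1 hi
    rw [Finset.mem_Icc] at hik
    rw [rankMoment_of_lt _ _ (by omega), zero_mul], Finset.mul_sum]
  refine Finset.sum_congr rfl fun i hi => ?_
  rw [rankMoment_eq_gaussQ hq ht hn hm (Finset.mem_Icc.1 hi).2, mul_assoc]

end Parameters

/-- Simplified moment identities: (a) when `φ` is less than the minimum skew rank distance of
the dual code; (b) when `φ` exceeds the diameter of the dual code. -/
theorem stmt17 (q : ℕ) (hq : IsPrimePow q) (F : Type*) [Field F] [Fintype F]
    (hF : Fintype.card F = q) (t : ℕ) (ht : 2 ≤ t) (n m : ℕ)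
    (hn : n = t / 2) (hm : m = t * (t - 1) / (2 * n))
    (𝒞 : Submodule F (Matrix (Fin t) (Fin t) F))
    (h𝒞 : ∀ A ∈ 𝒞, A.transpose = -A ∧ ∀ i, A i i = 0)
    (c : ℕ → ℕ)
    (hc : ∀ i, c i = Nat.card {A : Matrix (Fin t) (Fin t) F // A ∈ 𝒞 ∧ A.rank = 2 * i})
    (φ : ℕ) (hφ : φ ≤ n) :
    ((∀ A : Matrix (Fin t) (Fin t) F,
        (A.transpose = -A ∧ ∀ j, A j j = 0) →
        (∀ B ∈ 𝒞, Matrix.trace (A.transpose * B) = 0) → A ≠ 0 → 2 * φ < A.rank) →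
      (q : ℝ) ^ (m * φ) *
          ∑ i ∈ Finset.Icc φ n, (q : ℝ) ^ (2 * φ * (n - i)) * gaussQ (q : ℝ) (i : ℝ) φ * (c i : ℝ)
        = (Nat.card 𝒞 : ℝ) * gaussQ (q : ℝ) (n : ℝ) φ * skewGamma (q : ℝ) (m : ℝ) φ)
    ∧ ((∀ A : Matrix (Fin t) (Fin t) F,
        (A.transpose = -A ∧ ∀ j, A j j = 0) →
        (∀ B ∈ 𝒞, Matrix.trace (A.transpose * B) = 0) → A.rank < 2 * φ) →
      ∑ i ∈ Finset.range (φ + 1),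
          (-1 : ℝ) ^ i * (q : ℝ) ^ (i * (i - 1)) * (q : ℝ) ^ (2 * i * (φ - i)) *
            gaussQ (q : ℝ) ((n : ℝ) - (i : ℝ)) (n - φ) *
            skewGamma (q : ℝ) ((m : ℝ) - 2 * (i : ℝ)) (φ - i) * (c i : ℝ) = 0) := by
  subst hF
  have hq0 : (Fintype.card F : ℝ) ≠ 0 := Nat.cast_ne_zero.2 Fintype.card_ne_zero
  have hq1 : (1 : ℝ) < Fintype.card F := Nat.one_lt_cast.2 Fintype.one_lt_card
  have hle : 𝒞 ≤ alternatingMatrix (Fin t) F := h𝒞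
  have hφt : 2 * φ ≤ Fintype.card (Fin t) := by
    rw [Fintype.card_fin]
    omega
  set S := 𝒞.submoduleOf (alternatingMatrix (Fin t) F)
  have hS : Nat.card S = Nat.card 𝒞 := Nat.card_congr (Submodule.submoduleOfEquivOfLe hle).toEquiv
  have hcS : ∀ i, weightDistribution S i = c i := fun i =>
    (weightDistribution_submoduleOf hle i).trans (hc i).symm
  refine ⟨fun h => ?_, fun h => ?_⟩
  · have hmoment := sum_rankMoment_of_lt_skewRank_dual (S := S) hφt fun B hB hB0 => by
      have := h B.1 B.2 (trace_transpose_mul_eq_zero_of_mem_orthogonal hle hB) (by simpa using hB0)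
      rwa [← two_mul_skewRank, Nat.mul_lt_mul_left two_pos] at this
    rw [← sum_rankMoment_mul hq0 ht hn hm, mul_assoc, ← rankKernel_zero_right hq0 ht hn hm]
    simpa only [Fintype.card_fin, ← hn, hcS, hS] using hmoment
  · have hmoment := sum_rankKernel_eq_zero_of_skewRank_dual_lt (S := S) hφt fun B hB => by
      have := h B.1 B.2 (trace_transpose_mul_eq_zero_of_mem_orthogonal hle hB)
      rwa [← two_mul_skewRank, Nat.mul_lt_mul_left two_pos] at this
    rw [← sum_rankKernel_mul hq1 ht hn hm hφ]
    simpa only [Fintype.card_fin, ← hn, hcS] using hmoment
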